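/- Let ρ be a real random variable on a probability space satisfying the log-Metropolis–Hastings-ratio symmetry with E[ρ²] < ∞, let f : ℝ → ℝ be a nonnegative measurable function with E[f(|ρ|)] < ∞, and let κ > 0. Then E[f(|ρ|) · 1{|ρ| > κ}] ≤ 2 · E[f(|ρ|) · 1{ρ < −κ}]. -/

import Mathlib

open MeasureTheory

/-- A real random variable `ρ` on a probability space satisfies the
log-Metropolis–Hastings-ratio symmetry if for every measurable `f : ℝ → ℝ` with
`E[|f(ρ)|] < ∞` one has `E[f(-ρ) e^ρ] = E[f(ρ)]`. -/
def LMHRSymmetric {Ω : Type*} [MeasurableSpace Ω] (P : Measure Ω) (ρ : Ω → ℝ) : Prop :=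
  ∀ f : ℝ → ℝ, Measurable f → Integrable (fun ω => f (ρ ω)) P →
    ∫ ω, f (-ρ ω) * Real.exp (ρ ω) ∂P = ∫ ω, f (ρ ω) ∂P

/-- If `ρ` satisfies the log-Metropolis–Hastings-ratio symmetry, `E[ρ²] < ∞`, and `f` is a
nonnegative measurable function with `E[f(|ρ|)] < ∞`, then for every `κ > 0`,
`E[f(|ρ|) 1{|ρ| > κ}] ≤ 2 E[f(|ρ|) 1{ρ < -κ}]`. -/
theorem stmt4 {Ω : Type*} [MeasurableSpace Ω] (P : Measure Ω) [IsProbabilityMeasure P]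
    (ρ : Ω → ℝ) (hρ : Measurable ρ) (hsymm : LMHRSymmetric P ρ)
    (h2 : Integrable (fun ω => (ρ ω) ^ 2) P)
    (f : ℝ → ℝ) (hf : Measurable f) (hfnn : ∀ x, 0 ≤ f x)
    (hfint : Integrable (fun ω => f |ρ ω|) P)
    (κ : ℝ) (hκ : 0 < κ) :
    ∫ ω in {ω | κ < |ρ ω|}, f |ρ ω| ∂P ≤ 2 * ∫ ω in {ω | ρ ω < -κ}, f |ρ ω| ∂P := by
  have mA : MeasurableSet {ω | κ < ρ ω} := measurableSet_lt measurable_const hρ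
  have mB : MeasurableSet {ω | ρ ω < -κ} := measurableSet_lt hρ measurable_const
  have key : ∫ ω in {ω | κ < ρ ω}, f |ρ ω| ∂P ≤ ∫ ω in {ω | ρ ω < -κ}, f |ρ ω| ∂P := by
    have hg : Measurable (fun x : ℝ => (Set.Ioi κ).indicator (fun x => f |x|) x) :=
      (hf.comp measurable_abs).indicator measurableSet_Ioi
    have e1 : (fun ω => (Set.Ioi κ).indicator (fun x => f |x|) (ρ ω))
        = {ω | κ < ρ ω}.indicator (fun ω => f |ρ ω|) := by
      funext ω
      simp [Set.indicator_apply]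
    have h := hsymm _ hg (by rw [e1]; exact hfint.indicator mA)
    rw [e1, integral_indicator mA] at h
    rw [← h, ← integral_indicator mB]
    refine integral_mono_of_nonneg (Filter.Eventually.of_forall fun ω => ?_)
      (hfint.indicator mB) (Filter.Eventually.of_forall fun ω => ?_)
    · exact mul_nonneg (Set.indicator_nonneg (fun x _ => hfnn _) _) (Real.exp_pos _).le
    · by_cases hω : ρ ω < -κ
      · have h1 : κ < -ρ ω := by linarith
        simp only [Set.indicator_apply, Set.mem_Ioi, Set.mem_setOf_eq, if_pos hω, if_pos h1,
          abs_neg]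
        exact mul_le_of_le_one_right (hfnn _) (Real.exp_le_one_iff.2 (by linarith))
      · have h1 : ¬ κ < -ρ ω := by intro h; exact hω (by linarith)
        simp [Set.indicator_apply, hω, h1]
  have hU : {ω | κ < |ρ ω|} = {ω | κ < ρ ω} ∪ {ω | ρ ω < -κ} := by
    ext ω
    simp only [Set.mem_setOf_eq, Set.mem_union, lt_abs, lt_neg]
  have hD : Disjoint {ω | κ < ρ ω} {ω | ρ ω < -κ} := by
    rw [Set.disjoint_left]
    intro ω h1 h2
    simp only [Set.mem_setOf_eq] at h1 h2
    linarith
  rw [hU, setIntegral_union hD mB hfint.integrableOn hfint.integrableOn]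
  linarith
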